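/- Let Φ = A_{n−1}, let I, J ⊆ Δ, and let λ be an integral Φ_I-regular weight with Φ_{λ̄} = Φ_J. Let i_1, …, i_{m̄} be a permutation of {1, …, m̄} such that n̄_{i_1} ≥ … ≥ n̄_{i_{m̄}}, and set b_l = a_{i_l} for 1 ≤ l ≤ m̄. Then there exists a Φ_I-regular weight λ̂ = (b_1, …, b_{q_1}, λ̂_{q_1+1}, …, λ̂_n) such that λ ⟷ λ̂. -/

import Mathlib

namespace JantzenBlocksA

open scoped Classical

/-- The weight space `ℝ^n`. -/
abbrev V (n : ℕ) := Fin n → ℝ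

noncomputable section

/-- The standard inner product on `ℝ^n`. -/
def inn {n : ℕ} (x y : V n) : ℝ := ∑ i, x i * y i

/-- The standard basis vector `e i`. -/
def ee {n : ℕ} (i : Fin n) : V n := Pi.single i 1

/-- The reflection `s_v` in the vector `v`. -/
def sRefl {n : ℕ} (v x : V n) : V n := x - (2 * inn x v / inn v v) • v

/-- The root system `Φ = A_{n-1} = {e_i - e_j : i ≠ j}`. -/
def PhiA (n : ℕ) : Set (V n) := {v | ∃ i j : Fin n, i ≠ j ∧ v = ee i - ee j}

/-- The positive system `Φ⁺ = {e_i - e_j : i < j}`. -/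
def PhiAPos (n : ℕ) : Set (V n) := {v | ∃ i j : Fin n, i < j ∧ v = ee i - ee j}

/-- The simple root `α_{i+1} = e_{i+1} - e_{i+2}` (`0`-based index `i < n-1`). -/
def alphaA (n : ℕ) (i : Fin n) : V n :=
  if h : i.1 + 1 < n then ee i - ee ⟨i.1 + 1, h⟩ else 0

/-- The subsystem `Φ_I` generated by the simple roots indexed by `I`. -/
def PhiI (n : ℕ) (I : Finset (Fin n)) : Set (V n) :=
  PhiA n ∩ (Submodule.span ℝ (alphaA n '' (I : Set (Fin n))) : Set (V n))

/-- `λ` is `Φ_I`-regular. -/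
def RegI (n : ℕ) (I : Finset (Fin n)) (lam : V n) : Prop :=
  ∀ β ∈ PhiI n I, inn lam β ≠ 0

/-- `λ` is integral. -/
def IntegralW (n : ℕ) (lam : V n) : Prop :=
  ∀ β ∈ PhiA n, ∃ k : ℤ, 2 * inn lam β / inn β β = (k : ℝ)

/-- `λ` is dominant. -/
def DominantW (n : ℕ) (lam : V n) : Prop :=
  ∀ i : Fin n, 0 ≤ inn lam (alphaA n i)

/-- `μ` lies in the `W_I`-orbit of `λ`. -/
def WIOrb (n : ℕ) (I : Finset (Fin n)) : V n → V n → Prop :=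
  Relation.ReflTransGen (fun x y => ∃ i ∈ I, y = sRefl (alphaA n i) x)

/-- `μ` lies in the `W`-orbit of `λ`. -/
def WOrb (n : ℕ) : V n → V n → Prop := WIOrb n Finset.univ

/-- `λ ∈ Λ_I⁺`. -/
def LamIPlus (n : ℕ) (I : Finset (Fin n)) (lam : V n) : Prop :=
  IntegralW n lam ∧ ∀ i ∈ I, 0 < inn lam (alphaA n i)

/-- The sorted list `q_1 < … < q_{m-1}` (`1`-based values) of indices of `Δ∖I`. -/
def QlistA (n : ℕ) (I : Finset (Fin n)) : List ℕ :=
  (((Finset.univ.filter (fun j : Fin n => j.1 + 1 < n)) \ I).sort (· ≤ ·)).map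
    (fun j => j.1 + 1)

/-- The number `m` of segments determined by `I`. -/
def mvalA (n : ℕ) (I : Finset (Fin n)) : ℕ := (QlistA n I).length + 1

/-- `q_s`, with the conventions `q_0 = 0` and `q_m = n`. -/
def qA (n : ℕ) (I : Finset (Fin n)) (s : ℕ) : ℕ :=
  if s = 0 then 0 else if s < mvalA n I then (QlistA n I).getD (s - 1) 0 else n

/-- The multiplicity `n̄_t` of the `t`-th distinct value of a dominant weight. -/
def nbarA (n : ℕ) (J : Finset (Fin n)) (t : ℕ) : ℕ := qA n J t - qA n J (t - 1)

/-- `a_t = λ̄_{q̄_t}`: the `t`-th distinct entry value of the dominant weight `λ̄`. -/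
def aA (n : ℕ) (J : Finset (Fin n)) (lbar : V n) (t : ℕ) : ℝ :=
  if h : qA n J t - 1 < n then lbar ⟨qA n J t - 1, h⟩ else 0

/-- `β` is a linked root of `λ` (type `A`: no exceptional cases). -/
def LinkedA (n : ℕ) (I : Finset (Fin n)) (lam β : V n) : Prop :=
  RegI n I lam ∧ β ∈ PhiAPos n ∧ β ∉ PhiI n I ∧
  RegI n I (sRefl β lam) ∧ sRefl β lam ≠ lam

/-- One step in a connecting chain. -/
def ConnStepA (n : ℕ) (I : Finset (Fin n)) (x y : V n) : Prop :=
  RegI n I x ∧ RegI n I y ∧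
  (WIOrb n I x y ∨ ∃ β : V n, LinkedA n I x β ∧ WIOrb n I (sRefl β x) y)

/-- `λ ⟷ μ`: `λ` and `μ` are connected. -/
def ConnA (n : ℕ) (I : Finset (Fin n)) (lam mu : V n) : Prop :=
  RegI n I lam ∧ RegI n I mu ∧ Relation.ReflTransGen (ConnStepA n I) lam mu

/-- The set `^IW^Jλ̄ = Wλ̄ ∩ Λ_I⁺`. -/
def IWJsetA (n : ℕ) (I : Finset (Fin n)) (lbar : V n) : Set (V n) :=
  {mu | WOrb n lbar mu ∧ LamIPlus n I mu}

end

theorem inn_ee {n : ℕ} (x : V n) (i j : Fin n) : inn x (ee i - ee j) = x i - x j := by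
  simp [inn, ee, mul_sub, Finset.sum_sub_distrib, Pi.single_apply]

theorem sRefl_ee {n : ℕ} (x : V n) {i j : Fin n} (h : i ≠ j) :
    sRefl (ee i - ee j) x = x ∘ Equiv.swap i j := by
  have h2 : inn (ee i - ee j : V n) (ee i - ee j) = 2 := by
    rw [inn_ee]; simp [ee, h, h.symm]; norm_num
  funext k
  simp only [sRefl, h2, inn_ee, Pi.sub_apply, Pi.smul_apply, smul_eq_mul, Function.comp]
  by_cases hi : k = i
  · subst hi; simp [ee, h]
  · by_cases hj : k = j
    · subst hj; simp [ee, h.symm]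
    · rw [Equiv.swap_apply_of_ne_of_ne hi hj]; simp [ee, hi, hj]

/-- same segment -/
def Sim (n : ℕ) (I : Finset (Fin n)) (i j : Fin n) : Prop :=
  (ee i - ee j : V n) ∈ Submodule.span ℝ (alphaA n '' (I : Set (Fin n)))

theorem Sim.refl {n : ℕ} {I : Finset (Fin n)} (i : Fin n) : Sim n I i i := by
  simp [Sim]

theorem Sim.symm {n : ℕ} {I : Finset (Fin n)} {i j : Fin n} (h : Sim n I i j) : Sim n I j i := by
  have := Submodule.neg_mem _ h
  simpa [Sim] using this

theorem Sim.trans {n : ℕ} {I : Finset (Fin n)} {i j k : Fin n} (h : Sim n I i j)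
    (h' : Sim n I j k) : Sim n I i k := by
  have := Submodule.add_mem _ h h'
  simpa [Sim] using this

theorem regI_iff {n : ℕ} {I : Finset (Fin n)} {x : V n} :
    RegI n I x ↔ ∀ i j, Sim n I i j → x i = x j → i = j := by
  constructor
  · intro h i j hs hx
    by_contra hne
    exact h (ee i - ee j) ⟨⟨i, j, hne, rfl⟩, hs⟩ (by rw [inn_ee, hx, sub_self])
  · rintro h β ⟨⟨i, j, hne, rfl⟩, hs⟩ h0
    rw [inn_ee] at h0
    exact hne (h i j hs (sub_eq_zero.mp h0))

theorem alphaA_eq {n : ℕ} (i : Fin n) (h : i.1 + 1 < n) :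
    alphaA n i = ee i - ee ⟨i.1 + 1, h⟩ := by simp [alphaA, h]

theorem sRefl_alpha {n : ℕ} (x : V n) (i : Fin n) :
    ∃ σ : Equiv.Perm (Fin n), sRefl (alphaA n i) x = x ∘ σ := by
  by_cases h : i.1 + 1 < n
  · rw [alphaA_eq i h]
    exact ⟨_, sRefl_ee x (by simp [Fin.ext_iff])⟩
  · exact ⟨1, by simp [alphaA, h, sRefl]⟩

theorem orb_perm {n : ℕ} {I : Finset (Fin n)} {x y : V n} (h : WIOrb n I x y) :
    ∃ σ : Equiv.Perm (Fin n), y = x ∘ σ := by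
  induction h with
  | refl => exact ⟨1, rfl⟩
  | tail _ h ih =>
    obtain ⟨σ, rfl⟩ := ih
    obtain ⟨i, _, rfl⟩ := h
    obtain ⟨τ, hτ⟩ := sRefl_alpha (x ∘ σ) i
    exact ⟨σ * τ, by rw [hτ]; rfl⟩

noncomputable def cnt {n : ℕ} (x : V n) (v : ℝ) : ℕ := (Finset.univ.filter (fun i => x i = v)).card

theorem cnt_perm {n : ℕ} (x : V n) (σ : Equiv.Perm (Fin n)) (v : ℝ) : cnt (x ∘ σ) v = cnt x v := by
  unfold cnt
  refine Finset.card_bij (fun i _ => σ i) ?_ ?_ ?_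
  · intro a; simp
  · intro a _ b _; simp
  · intro b hb; exact ⟨σ.symm b, by simpa using hb, by simp⟩

theorem exists_other {n : ℕ} {I : Finset (Fin n)} {x : V n} (hx : RegI n I x) (p : Fin n) (y : ℝ)
    (hC : ∀ r, Sim n I p r → x r ≠ y) (hc : cnt x (x p) ≤ cnt x y) :
    ∃ r, x r = y ∧ ∀ k, Sim n I r k → x k ≠ x p := by
  by_contra hcon
  push Not at hcon
  choose! g hg using hcon
  have : cnt x y < cnt x (x p) := by
    unfold cnt
    refine lt_of_le_of_lt (Finset.card_le_card_of_injOn (t := (Finset.univ.filter (fun i => x i = x p)).erase p) g ?_ ?_) (Finset.card_erase_lt_of_mem (by simp))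
    · intro r hr
      simp only [Finset.coe_filter, Finset.mem_univ, true_and, Set.mem_ofPred_eq] at hr
      have := hg r hr
      simp only [Finset.coe_erase, Finset.coe_filter, Finset.mem_univ, true_and, Set.mem_sdiff, Set.mem_ofPred_eq, Set.mem_singleton_iff]
      refine ⟨this.2, fun h => ?_⟩
      rw [h] at this
      exact hC r this.1.symm hr
    · intro r hr s hs hrs
      simp only [Finset.coe_filter, Finset.mem_univ, true_and, Set.mem_ofPred_eq] at hr hs
      have h1 := (hg r hr).1
      have h2 := (hg s hs).1
      rw [← hrs] at h2
      exact regI_iff.mp hx r s (h1.trans h2.symm) (hr.trans hs.symm)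
  omega

theorem reg_swap_cross {n : ℕ} {I : Finset (Fin n)} {x : V n} (hx : RegI n I x) (p r : Fin n)
    (hC : ∀ k, Sim n I p k → x k ≠ x r) (hR : ∀ k, Sim n I r k → x k ≠ x p) :
    RegI n I (x ∘ Equiv.swap p r) := by
  rw [regI_iff] at hx ⊢
  intro i j hs he
  simp only [Function.comp, Equiv.swap_apply_def] at he
  by_contra hne
  split_ifs at he with h1 h2 h3 h4 h5 h6 h7
  all_goals first
    | (subst_vars; exact hne rfl)
    | (subst_vars; exact hC _ hs he.symm)
    | (subst_vars; exact hR _ hs he.symm)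
    | (subst_vars; exact hC _ hs.symm he)
    | (subst_vars; exact hR _ hs.symm he)
    | (subst_vars; exact hC _ hs rfl)
    | (subst_vars; exact hR _ hs rfl)
    | exact hne (hx i j hs he)

theorem reg_swap_in {n : ℕ} {I : Finset (Fin n)} {x : V n} (hx : RegI n I x) (p r : Fin n)
    (h : Sim n I p r) : RegI n I (x ∘ Equiv.swap p r) := by
  have key : ∀ k, Sim n I (Equiv.swap p r k) k := by
    intro k
    rw [Equiv.swap_apply_def]
    split_ifs with h1 h2
    · subst h1; exact h.symm
    · subst h2; exact h
    · exact Sim.refl k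
  rw [regI_iff] at hx ⊢
  intro i j hs he
  exact (Equiv.swap p r).injective (hx _ _ ((key i).trans (hs.trans (key j).symm)) he)

theorem orb_swap {n : ℕ} {I : Finset (Fin n)} (q : ℕ) (hq : ∀ k : Fin n, k.1 + 1 < q → k ∈ I)
    (d : ℕ) : ∀ (i j : Fin n), j.1 = i.1 + d + 1 → j.1 < q → ∀ x : V n,
      WIOrb n I x (x ∘ Equiv.swap i j) ∧ Sim n I i j := by
  induction d with
  | zero =>
    intro i j hij hjq x
    have hI : i ∈ I := hq i (by omega)
    have hlt : i.1 + 1 < n := by have := j.2; omega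
    have hj : j = ⟨i.1 + 1, hlt⟩ := Fin.ext hij
    have hne : i ≠ j := by intro h; rw [h] at hij; omega
    have ha : alphaA n i = ee i - ee j := by rw [alphaA_eq i hlt, hj]
    refine ⟨Relation.ReflTransGen.single ⟨i, hI, ?_⟩, ?_⟩
    · rw [ha, sRefl_ee x hne]
    · unfold Sim; rw [← ha]
      exact Submodule.subset_span ⟨i, hI, rfl⟩
  | succ d ih =>
    intro i j hij hjq x
    have hlt : i.1 + d + 1 < n := by have := j.2; omega
    set m : Fin n := ⟨i.1 + d + 1, hlt⟩ with hm
    have hI : m ∈ I := hq m (by simp [hm]; omega)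
    have hne : m ≠ j := by intro h; rw [← h] at hij; simp only [hm] at hij; omega
    have hne' : i ≠ j := by intro h; rw [h] at hij; omega
    have hnm : i ≠ m := by intro h; have := congrArg Fin.val h; simp [hm] at this; omega
    have hlt' : m.1 + 1 < n := by have := j.2; simp [hm]; omega
    have hj : j = ⟨m.1 + 1, hlt'⟩ := Fin.ext (by simp [hm]; omega)
    have ha : alphaA n m = ee m - ee j := by rw [alphaA_eq m hlt', hj]
    have hs : Sim n I m j := by
      unfold Sim; rw [← ha]
      exact Submodule.subset_span ⟨m, hI, rfl⟩
    have h1 : ∀ y : V n, WIOrb n I y (y ∘ Equiv.swap m j) := fun y =>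
      Relation.ReflTransGen.single ⟨m, hI, by rw [ha, sRefl_ee y hne]⟩
    have hi := fun y => ih i m rfl (by simp [hm]; omega) y
    refine ⟨?_, (hi x).2.trans hs⟩
    have := ((h1 x).trans (hi _).1).trans (h1 _)
    have e : x ∘ Equiv.swap i j = ((x ∘ Equiv.swap m j) ∘ Equiv.swap i m) ∘ Equiv.swap m j := by
      have : Equiv.swap i j = Equiv.swap m j * Equiv.swap i m * Equiv.swap m j := by
        rw [Equiv.swap_mul_swap_mul_swap hnm hne', Equiv.swap_comm]
      rw [this]; rfl
    rw [e]; exact this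

theorem not_sim {n : ℕ} {I : Finset (Fin n)} (hIidx : ∀ i ∈ I, i.1 + 1 < n) (q : ℕ)
    (hq : ∀ k ∈ I, k.1 + 1 ≠ q) {p r : Fin n} (hp : p.1 < q) (hs : Sim n I p r) : r.1 < q := by
  let f : V n →ₗ[ℝ] ℝ := ∑ l : Fin n, if l.1 < q then LinearMap.proj l else 0
  have hf : ∀ i : Fin n, f (ee i) = if i.1 < q then 1 else 0 := by
    intro i
    simp only [f, LinearMap.sum_apply]
    rw [Finset.sum_eq_single i]
    · split_ifs <;> simp [ee]
    · intro b _ hb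
      split_ifs <;> simp [ee, hb]
    · simp
  have hle : Submodule.span ℝ (alphaA n '' (I : Set (Fin n))) ≤ LinearMap.ker f := by
    rw [Submodule.span_le]
    rintro _ ⟨k, hk, rfl⟩
    have h1 := hIidx k hk
    have h2 := hq k hk
    simp only [SetLike.mem_coe, LinearMap.mem_ker]
    rw [alphaA_eq k h1, map_sub, hf, hf]
    simp only
    split_ifs <;> first | omega | simp
  have := hle hs
  rw [LinearMap.mem_ker, map_sub, hf, hf, if_pos hp] at this
  by_contra hr
  rw [if_neg hr] at this
  norm_num at this

theorem qlist_mem {n : ℕ} {J : Finset (Fin n)} {a : ℕ} :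
    a ∈ QlistA n J ↔ ∃ j : Fin n, j.1 + 1 < n ∧ j ∉ J ∧ j.1 + 1 = a := by
  simp [QlistA, and_assoc]

theorem qlist_sorted (n : ℕ) (J : Finset (Fin n)) : (QlistA n J).Pairwise (· < ·) := by
  unfold QlistA
  rw [List.pairwise_map]
  exact ((Finset.sortedLT_sort _).pairwise).imp (fun h => by simpa using h)

theorem qA_last (n : ℕ) (J : Finset (Fin n)) : qA n J (mvalA n J) = n := by
  simp [qA, mvalA]

theorem qA_mid {n : ℕ} {J : Finset (Fin n)} {s : ℕ} (h1 : 1 ≤ s) (h2 : s < mvalA n J) :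
    ∃ j : Fin n, j.1 + 1 < n ∧ j ∉ J ∧ j.1 + 1 = qA n J s := by
  rw [← qlist_mem]
  have h3 : s - 1 < (QlistA n J).length := by unfold mvalA at h2; omega
  have : qA n J s = (QlistA n J)[s-1] := by
    simp [qA, h2, Nat.ne_of_gt h1, h3]
  rw [this]; exact List.getElem_mem _

theorem qA_surj {n : ℕ} {J : Finset (Fin n)} (j : Fin n) (h : j.1 + 1 < n) (hj : j ∉ J) :
    ∃ s, 1 ≤ s ∧ s < mvalA n J ∧ qA n J s = j.1 + 1 := by
  have : j.1 + 1 ∈ QlistA n J := qlist_mem.mpr ⟨j, h, hj, rfl⟩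
  obtain ⟨k, hk, he⟩ := List.getElem_of_mem this
  refine ⟨k + 1, by omega, by unfold mvalA; omega, ?_⟩
  simp [qA, mvalA, hk, he]

theorem qA_lt {n : ℕ} (hn : 0 < n) {J : Finset (Fin n)} {s t : ℕ} (h : s < t) (ht : t ≤ mvalA n J) :
    qA n J s < qA n J t := by
  rcases Nat.eq_zero_or_pos s with rfl | hs
  · have : qA n J 0 = 0 := by simp [qA]
    rw [this]
    rcases ht.lt_or_eq with ht | rfl
    · obtain ⟨j, _, _, e⟩ := qA_mid (n := n) (J := J) (s := t) (by omega) ht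
      omega
    · rw [qA_last]; exact hn
  · rcases ht.lt_or_eq with ht | rfl
    · have h3 : s - 1 < (QlistA n J).length := by unfold mvalA at ht; omega
      have h4 : t - 1 < (QlistA n J).length := by unfold mvalA at ht; omega
      have e1 : qA n J s = (QlistA n J)[s-1] := by
        simp [qA, h.trans ht, Nat.ne_of_gt hs, h3]
      have e2 : qA n J t = (QlistA n J)[t-1] := by
        simp [qA, ht, show t ≠ 0 by omega, h4]
      rw [e1, e2]
      exact List.pairwise_iff_getElem.mp (qlist_sorted n J) _ _ _ _ (by omega)
    · obtain ⟨j, _, _, e⟩ := qA_mid (n := n) (J := J) (s := s) (by omega) h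
      rw [qA_last]; omega

theorem qA_le {n : ℕ} (hn : 0 < n) {J : Finset (Fin n)} {s t : ℕ} (h : s ≤ t) (ht : t ≤ mvalA n J) :
    qA n J s ≤ qA n J t := by
  rcases h.lt_or_eq with h | rfl
  · exact (qA_lt hn h ht).le
  · rfl

theorem mem_block {n : ℕ} (hn : 0 < n) {J : Finset (Fin n)} {t : ℕ} (h1 : 1 ≤ t)
    (ht : t ≤ mvalA n J) (k : Fin n) (hk : qA n J (t-1) ≤ k.1) (hk' : k.1 + 1 < qA n J t) : k ∈ J := by
  by_contra hkJ
  have hqn : qA n J t ≤ n := by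
    have := qA_le hn ht le_rfl
    rwa [qA_last] at this
  obtain ⟨s, hs1, hs2, hs⟩ := qA_surj k (by omega) hkJ
  rcases lt_or_ge s t with h | h
  · have := qA_le hn (J := J) (show s ≤ t - 1 by omega) (by omega)
    omega
  · have := qA_le hn h hs2.le
    omega

theorem exists_block {n : ℕ} (J : Finset (Fin n)) (i : Fin n) :
    ∃ t, 1 ≤ t ∧ t ≤ mvalA n J ∧ qA n J (t-1) ≤ i.1 ∧ i.1 < qA n J t := by
  have hex : ∃ t, i.1 < qA n J t := ⟨mvalA n J, by rw [qA_last]; exact i.2⟩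
  refine ⟨Nat.find hex, ?_, Nat.find_min' hex (by rw [qA_last]; exact i.2), ?_, Nat.find_spec hex⟩
  · by_contra h
    have h0 : Nat.find hex = 0 := by omega
    have := Nat.find_spec hex
    rw [h0] at this; simp [qA] at this
  · by_contra h
    push Not at h
    have := Nat.find_min' hex h
    have h2 := Nat.find_spec hex
    have h0 : Nat.find hex = 0 := by omega
    rw [h0] at h2; simp [qA] at h2

section bar
variable {n : ℕ} {J : Finset (Fin n)} {lbar : V n}

theorem lbar_anti (hdom : DominantW n lbar) (i j : Fin n) (h : i.1 ≤ j.1) : lbar j ≤ lbar i := by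
  obtain ⟨j, hj⟩ := j
  simp only at h
  induction j, h using Nat.le_induction with
  | base => exact le_rfl
  | succ k hk ih =>
    have := hdom ⟨k, by omega⟩
    rw [alphaA_eq _ hj, inn_ee] at this
    have := ih (by omega)
    linarith

theorem lbar_block (hn : 0 < n)
    (hJ : ∀ i : Fin n, i.1 + 1 < n → (i ∈ J ↔ inn lbar (alphaA n i) = 0)) {t : ℕ} (h1 : 1 ≤ t)
    (ht : t ≤ mvalA n J) (i : Fin n) (hi : qA n J (t-1) ≤ i.1) (j : Fin n) (hij : i.1 ≤ j.1)
    (hj : j.1 < qA n J t) : lbar j = lbar i := by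
  obtain ⟨j, hjn⟩ := j
  simp only at hij hj
  induction j, hij using Nat.le_induction with
  | base => rfl
  | succ k hk ih =>
    have hm := mem_block hn h1 ht ⟨k, by omega⟩ (by simp only; omega) (by simp only; omega)
    have := (hJ ⟨k, by omega⟩ hjn).mp hm
    rw [alphaA_eq _ hjn, inn_ee] at this
    have := ih (by omega) (by omega)
    linarith

theorem lbar_eq_aA (hn : 0 < n)
    (hJ : ∀ i : Fin n, i.1 + 1 < n → (i ∈ J ↔ inn lbar (alphaA n i) = 0)) {t : ℕ} (h1 : 1 ≤ t)
    (ht : t ≤ mvalA n J) (i : Fin n) (hi : qA n J (t-1) ≤ i.1) (hi' : i.1 < qA n J t) :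
    lbar i = aA n J lbar t := by
  have hqn : qA n J t ≤ n := by
    have := qA_le hn ht le_rfl
    rwa [qA_last] at this
  have h : qA n J t - 1 < n := by omega
  rw [aA, dif_pos h]
  exact (lbar_block hn hJ h1 ht i hi ⟨_, h⟩ (by simp only; omega) (by simp only; omega)).symm

theorem aA_lt (hn : 0 < n) (hdom : DominantW n lbar)
    (hJ : ∀ i : Fin n, i.1 + 1 < n → (i ∈ J ↔ inn lbar (alphaA n i) = 0)) {s t : ℕ} (h1 : 1 ≤ s)
    (hst : s < t) (ht : t ≤ mvalA n J) : aA n J lbar t < aA n J lbar s := by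
  have hqn : qA n J t ≤ n := by
    have := qA_le hn ht le_rfl
    rwa [qA_last] at this
  have hlt := qA_lt hn hst ht
  obtain ⟨j, hj1, hj2, hj3⟩ := qA_mid h1 (lt_of_lt_of_le hst ht)
  have ht' : qA n J t - 1 < n := by omega
  have hs' : qA n J s - 1 < n := by omega
  rw [aA, dif_pos ht', aA, dif_pos hs']
  have e : (⟨qA n J s - 1, hs'⟩ : Fin n) = j := Fin.ext (by simp only; omega)
  rw [e]
  have h2 := lbar_anti hdom ⟨j.1 + 1, hj1⟩ ⟨qA n J t - 1, ht'⟩ (by simp only; omega)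
  have h3 := hdom j
  have h4 := mt (hJ j hj1).mpr hj2
  rw [alphaA_eq _ hj1, inn_ee] at h3 h4
  have := lt_of_le_of_ne h3 (Ne.symm h4)
  linarith

theorem aA_inj (hn : 0 < n) (hdom : DominantW n lbar)
    (hJ : ∀ i : Fin n, i.1 + 1 < n → (i ∈ J ↔ inn lbar (alphaA n i) = 0)) {s t : ℕ} (h1 : 1 ≤ s)
    (h1' : 1 ≤ t) (hs : s ≤ mvalA n J) (ht : t ≤ mvalA n J)
    (h : aA n J lbar s = aA n J lbar t) : s = t := by
  rcases lt_trichotomy s t with h' | h' | h'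
  · have := aA_lt hn hdom hJ h1 h' ht; linarith
  · exact h'
  · have := aA_lt hn hdom hJ h1' h' hs; linarith

theorem cnt_aA (hn : 0 < n) (hdom : DominantW n lbar)
    (hJ : ∀ i : Fin n, i.1 + 1 < n → (i ∈ J ↔ inn lbar (alphaA n i) = 0)) {t : ℕ} (h1 : 1 ≤ t)
    (ht : t ≤ mvalA n J) : cnt lbar (aA n J lbar t) = nbarA n J t := by
  have hqn : qA n J t ≤ n := by
    have := qA_le hn ht le_rfl
    rwa [qA_last] at this
  have key : ∀ i : Fin n, lbar i = aA n J lbar t ↔ qA n J (t-1) ≤ i.1 ∧ i.1 < qA n J t := by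
    intro i
    constructor
    · intro h
      obtain ⟨s, hs1, hs2, hs3, hs4⟩ := exists_block J i
      have := lbar_eq_aA hn hJ hs1 hs2 i hs3 hs4
      have := aA_inj hn hdom hJ hs1 h1 hs2 ht (this.symm.trans h)
      subst this
      exact ⟨hs3, hs4⟩
    · rintro ⟨h, h'⟩
      exact lbar_eq_aA hn hJ h1 ht i h h'
  unfold cnt nbarA
  simp only [key]
  rw [← Nat.card_Ico (qA n J (t-1)) (qA n J t)]
  refine Finset.card_bij (fun i _ => i.1) ?_ ?_ ?_
  · intro a ha; simpa using ha
  · intro a _ b _ h; exact Fin.ext h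
  · intro b hb
    have hb := Finset.mem_Ico.mp hb
    exact ⟨⟨b, by omega⟩, by simpa using hb, rfl⟩

end bar

/-- Lemma 6.10 / `bkswlem1`. -/
theorem statement12 (n : ℕ) (I J : Finset (Fin n)) (lam lbar : V n)
    (hIidx : ∀ i ∈ I, i.1 + 1 < n) (hJidx : ∀ j ∈ J, j.1 + 1 < n)
    (hint : IntegralW n lam) (hreg : RegI n I lam)
    (horb : WOrb n lam lbar) (hdom : DominantW n lbar)
    (hJ : ∀ i : Fin n, i.1 + 1 < n → (i ∈ J ↔ inn lbar (alphaA n i) = 0))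
    (ii : ℕ → ℕ)
    (hbij : Set.BijOn ii (Set.Icc 1 (mvalA n J)) (Set.Icc 1 (mvalA n J)))
    (hmono : ∀ s t : ℕ, 1 ≤ s → s ≤ t → t ≤ mvalA n J →
      nbarA n J (ii t) ≤ nbarA n J (ii s)) :
    ∃ lamhat : V n, RegI n I lamhat ∧
      (∀ i : Fin n, i.1 + 1 ≤ qA n I 1 → lamhat i = aA n J lbar (ii (i.1 + 1))) ∧
      ConnA n I lam lamhat := by
  rcases Nat.eq_zero_or_pos n with rfl | hn
  · exact ⟨lam, hreg, fun i => i.elim0, hreg, hreg, Relation.ReflTransGen.refl⟩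
  obtain ⟨σ, hσ⟩ := orb_perm horb
  have hcnt0 : ∀ v, cnt lam v = cnt lbar v := fun v => by rw [hσ, cnt_perm]
  have hmI : 1 ≤ mvalA n I := by unfold mvalA; omega
  have hqn : qA n I 1 ≤ n := by
    have := qA_le hn hmI le_rfl
    rwa [qA_last] at this
  have hqI : ∀ k : Fin n, k.1 + 1 < qA n I 1 → k ∈ I := fun k hk =>
    mem_block hn le_rfl hmI k (by simp [qA]) hk
  have hqI' : ∀ k ∈ I, k.1 + 1 ≠ qA n I 1 := by
    intro k hk he
    rcases hmI.lt_or_eq with h | h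
    · obtain ⟨j, hj1, hj2, hj3⟩ := qA_mid le_rfl h
      have : k = j := Fin.ext (by omega)
      exact hj2 (this ▸ hk)
    · have h2 := hIidx k hk
      rw [h, qA_last] at he
      omega
  have hsim : ∀ i j : Fin n, i.1 < qA n I 1 → j.1 < qA n I 1 → Sim n I i j := by
    intro i j hi hj
    rcases lt_trichotomy i.1 j.1 with h | h | h
    · exact (orb_swap _ hqI (j.1 - i.1 - 1) i j (by omega) hj lam).2
    · rw [Fin.ext h]; exact Sim.refl j
    · exact (orb_swap _ hqI (i.1 - j.1 - 1) j i (by omega) hi lam).2.symm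
  -- every value of a weight with the right counts is a `b_k`
  have hval : ∀ mu : V n, (∀ v, cnt mu v = cnt lbar v) → ∀ i, ∃ k, 1 ≤ k ∧ k ≤ mvalA n J ∧
      mu i = aA n J lbar (ii k) := by
    intro mu hmu i
    have : 0 < cnt lbar (mu i) := by
      rw [← hmu]; exact Finset.card_pos.mpr ⟨i, by simp⟩
    obtain ⟨j, hj⟩ := Finset.card_pos.mp this
    simp only [Finset.mem_filter, Finset.mem_univ, true_and] at hj
    obtain ⟨s, hs1, hs2, hs3, hs4⟩ := exists_block J j
    obtain ⟨k, hk, hks⟩ := hbij.surjOn (show s ∈ Set.Icc 1 (mvalA n J) from ⟨hs1, hs2⟩)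
    exact ⟨k, hk.1, hk.2, by rw [hks, ← hj]; exact lbar_eq_aA hn hJ hs1 hs2 j hs3 hs4⟩
  have main : ∀ p : ℕ, p ≤ qA n I 1 → ∃ mu : V n, RegI n I mu ∧ (∀ v, cnt mu v = cnt lbar v) ∧
      (∀ i : Fin n, i.1 < p → mu i = aA n J lbar (ii (i.1 + 1))) ∧
      Relation.ReflTransGen (ConnStepA n I) lam mu := by
    intro p
    induction p with
    | zero => exact fun _ => ⟨lam, hreg, hcnt0, fun i hi => by omega, Relation.ReflTransGen.refl⟩
    | succ p ih =>
      intro hp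
      obtain ⟨mu, hmr, hmc, hmv, hmt⟩ := ih (by omega)
      have hpn : p < n := by omega
      set P : Fin n := ⟨p, hpn⟩ with hP
      set y := aA n J lbar (ii (p + 1)) with hy
      have hPq : P.1 < qA n I 1 := by simp [hP]; omega
      -- the final assembly
      have fin : ∀ r : Fin n, p ≤ r.1 → mu r = y → RegI n I (mu ∘ Equiv.swap P r) →
          ConnStepA n I mu (mu ∘ Equiv.swap P r) → ∃ mu : V n, RegI n I mu ∧
          (∀ v, cnt mu v = cnt lbar v) ∧
          (∀ i : Fin n, i.1 < p + 1 → mu i = aA n J lbar (ii (i.1 + 1))) ∧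
          Relation.ReflTransGen (ConnStepA n I) lam mu := by
        intro r hr hry h1 h2
        refine ⟨_, h1, fun v => by rw [cnt_perm, hmc], ?_, hmt.tail h2⟩
        intro i hi
        rcases Nat.lt_succ_iff_lt_or_eq.mp hi with h | h
        · have e1 : i ≠ P := by intro h'; rw [h'] at h; simp [hP] at h
          have e2 : i ≠ r := by intro h'; rw [h'] at h; omega
          simp only [Function.comp, Equiv.swap_apply_of_ne_of_ne e1 e2]
          exact hmv i h
        · have e1 : i = P := Fin.ext h
          simp only [Function.comp, e1, Equiv.swap_apply_left]
          rw [hry]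
      obtain ⟨k, hk1, hk2, hk⟩ := hval mu hmc P
      have hkp : p + 1 ≤ k := by
        by_contra hlt
        have hkn : k - 1 < n := by omega
        have h1 := hmv ⟨k - 1, hkn⟩ (by simp only; omega)
        simp only [show k - 1 + 1 = k by omega] at h1
        have := regI_iff.mp hmr _ _ (hsim P ⟨k - 1, hkn⟩ hPq (by simp only; omega))
          (hk.trans h1.symm)
        have := congrArg Fin.val this
        simp only [hP] at this
        omega
      have binj : ∀ s t, 1 ≤ s → s ≤ mvalA n J → 1 ≤ t → t ≤ mvalA n J →
          aA n J lbar (ii s) = aA n J lbar (ii t) → s = t := by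
        intro s t hs1 hs2 ht1 ht2 h
        have a1 := hbij.mapsTo (show s ∈ Set.Icc 1 (mvalA n J) from ⟨hs1, hs2⟩)
        have a2 := hbij.mapsTo (show t ∈ Set.Icc 1 (mvalA n J) from ⟨ht1, ht2⟩)
        exact hbij.injOn ⟨hs1, hs2⟩ ⟨ht1, ht2⟩ (aA_inj hn hdom hJ a1.1 a2.1 a1.2 a2.2 h)
      by_cases hin : ∃ r : Fin n, r.1 < qA n I 1 ∧ mu r = y
      · obtain ⟨r, hrq, hry⟩ := hin
        have hpr : p ≤ r.1 := by
          by_contra hlt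
          have h1 := hmv r (by omega)
          have := binj _ _ (by omega) (by omega) (by omega) (by omega) (h1.symm.trans hry)
          omega
        have hR := reg_swap_in hmr P r (hsim P r hPq hrq)
        refine fin r hpr hry hR ⟨hmr, hR, Or.inl ?_⟩
        rcases hpr.lt_or_eq with h | h
        · exact (orb_swap _ hqI (r.1 - p - 1) P r (by simp only [hP]; omega) hrq mu).1
        · have : r = P := Fin.ext h.symm
          rw [this, Equiv.swap_self]
          exact Relation.ReflTransGen.refl
      · push Not at hin
        have hC : ∀ r, Sim n I P r → mu r ≠ y := fun r hr =>
          hin r (not_sim hIidx _ hqI' hPq hr)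
        have hc : cnt mu (mu P) ≤ cnt mu y := by
          have a1 := hbij.mapsTo (show k ∈ Set.Icc 1 (mvalA n J) from ⟨hk1, hk2⟩)
          have a2 := hbij.mapsTo (show p + 1 ∈ Set.Icc 1 (mvalA n J) from ⟨by omega, by omega⟩)
          rw [hmc, hmc, hk, hy, cnt_aA hn hdom hJ a1.1 a1.2, cnt_aA hn hdom hJ a2.1 a2.2]
          exact hmono _ _ (by omega) hkp hk2
        obtain ⟨r, hry, hr⟩ := exists_other hmr P y hC hc
        have hns : ¬ Sim n I P r := fun h => hC r h hry
        have hrq : qA n I 1 ≤ r.1 := by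
          by_contra h
          exact hns (hsim P r hPq (by omega))
        have hPr : P < r := by rw [Fin.lt_def]; omega
        have hR := reg_swap_cross hmr P r (by rw [hry]; exact hC) hr
        have hsr := sRefl_ee mu hPr.ne
        refine fin r (by omega) hry hR ⟨hmr, hR, Or.inr ⟨ee P - ee r, ⟨hmr, ⟨P, r, hPr, rfl⟩,
          fun h => hns h.2, by rw [hsr]; exact hR, ?_⟩, ?_⟩⟩
        · rw [hsr]
          intro h
          have := congrFun h P
          simp only [Function.comp, Equiv.swap_apply_left] at this
          exact hC P (Sim.refl P) (this.symm.trans hry)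
        · rw [hsr]; exact Relation.ReflTransGen.refl
  obtain ⟨mu, h1, _, h3, h4⟩ := main _ le_rfl
  exact ⟨mu, h1, fun i hi => h3 i (by omega), hreg, h1, h4⟩

end JantzenBlocksA
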